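/- arXiv:1801.08229 — 4 statements merged into one kernel-verified Lean document; each statement's English description precedes it below -/
import Mathlib

section
/- For every ψ ∈ F, the Monge–Ampère energy φ ↦ E(φ, ψ) is concave on F: for all φ₁, φ₂ ∈ F and all t ∈ [0,1], E(t·φ₁ + (1−t)·φ₂, ψ) ≥ t·E(φ₁, ψ) + (1−t)·E(φ₂, ψ). Equivalently (and consequently), for every ψ ∈ F the functional φ ↦ J_ψ(φ) is convex on F. -/
open Finset

/-- Abstract Monge–Ampère pairing setup with `n = m + 1`: a symmetric multilinear
form `B` on `W^(n+1) = W^(m+2)`, a unit element `one`, and a nonempty convex set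
`F ⊆ W`, satisfying (i) normalization `B(𝟙, φ₁, …, φₙ) = 1`, (ii) integration by
parts `B(u, 𝟙, g₂, …, gₙ) = 0` for `u ∈ W₀` and `gᵢ ∈ W' = span (F ∪ {𝟙})`, and
(iii) the Cauchy–Schwarz / local Hodge index inequality
`B(u, u, φ₁, …, φ_{n-1}) ≤ 0` for `u ∈ W₀`. -/
structure MASetup (m : ℕ) (W : Type*) [AddCommGroup W] [Module ℝ W] where
  B : MultilinearMap ℝ (fun _ : Fin (m + 2) => W) ℝ
  symm : ∀ (v : Fin (m + 2) → W) (σ : Equiv.Perm (Fin (m + 2))), B (v ∘ σ) = B v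
  one : W
  F : Set W
  Fne : F.Nonempty
  Fconv : Convex ℝ F
  unital : ∀ g : Fin (m + 1) → W, (∀ i, g i ∈ F) → B (Fin.cons one g) = 1
  parts : ∀ u ∈ Submodule.span ℝ ({x | ∃ φ ∈ F, ∃ ψ ∈ F, x = φ - ψ} ∪ {one}),
      ∀ g : Fin m → W, (∀ i, g i ∈ Submodule.span ℝ (F ∪ {one})) →
        B (Fin.cons u (Fin.cons one g)) = 0
  hodge : ∀ u ∈ Submodule.span ℝ ({x | ∃ φ ∈ F, ∃ ψ ∈ F, x = φ - ψ} ∪ {one}),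
      ∀ g : Fin m → W, (∀ i, g i ∈ F) → B (Fin.cons u (Fin.cons u g)) ≤ 0

namespace MASetup

variable {m : ℕ} {W : Type*} [AddCommGroup W] [Module ℝ W]

/-- The vector with `j` copies of `φ` followed by copies of `ψ`. -/
def mixVec (φ ψ : W) (j : ℕ) {k : ℕ} : Fin k → W := fun i => if (i : ℕ) < j then φ else ψ

/-- The linear span `W₀` of the differences of elements of `F` together with `one`. -/
def W0 (S : MASetup m W) : Submodule ℝ W :=
  Submodule.span ℝ ({x | ∃ φ ∈ S.F, ∃ ψ ∈ S.F, x = φ - ψ} ∪ {S.one})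

/-- The Monge–Ampère energy
`E(φ, ψ) = (n+1)⁻¹ ∑_{j=0}^{n} B(φ-ψ, φ, …, φ, ψ, …, ψ)` with `j` copies of `φ`
and `n - j` copies of `ψ` among the last `n` arguments. -/
noncomputable def energy (S : MASetup m W) (φ ψ : W) : ℝ :=
  ((m : ℝ) + 2)⁻¹ * ∑ j ∈ Finset.range (m + 2), S.B (Fin.cons (φ - ψ) (mixVec φ ψ j))

/-- The functional `I(φ, ψ) = B(φ-ψ, ψ, …, ψ) - B(φ-ψ, φ, …, φ)`. -/
noncomputable def Ifun (S : MASetup m W) (φ ψ : W) : ℝ :=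
  S.B (Fin.cons (φ - ψ) fun _ => ψ) - S.B (Fin.cons (φ - ψ) fun _ => φ)

/-- The functional `J_ψ(φ) = B(φ-ψ, ψ, …, ψ) - E(φ, ψ)`. -/
noncomputable def Jfun (S : MASetup m W) (ψ φ : W) : ℝ :=
  S.B (Fin.cons (φ - ψ) fun _ => ψ) - S.energy φ ψ

end MASetup

namespace MASetup

variable {m : ℕ} {W : Type*} [AddCommGroup W] [Module ℝ W]

theorem cons_mixVec_left (φ ψ : W) (j k : ℕ) :
    (Fin.cons φ (mixVec φ ψ j : Fin k → W) : Fin (k + 1) → W) = mixVec φ ψ (j + 1) := by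
  funext i
  refine Fin.cases ?_ (fun i => ?_) i <;> simp [mixVec]

theorem cons_mixVec_right (φ ψ : W) (j k : ℕ) (hj : j < k + 1) :
    (Fin.cons ψ (mixVec φ ψ j : Fin k → W) : Fin (k + 1) → W) =
      (mixVec φ ψ j : Fin (k + 1) → W) ∘ (Equiv.swap (0 : Fin (k + 1)) ⟨j, hj⟩) := by
  funext i
  refine Fin.cases ?_ (fun i => ?_) i
  · simp [mixVec]
  · by_cases h : i.succ = ⟨j, hj⟩
    · have h' : (i : ℕ) + 1 = j := by simpa using congrArg Fin.val h
      simp only [Function.comp, h, Equiv.swap_apply_right]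
      rw [← h]
      simp only [Fin.cons_succ, mixVec]
      rw [if_pos (by omega), if_pos (by simp; omega)]
    · have h' : (i : ℕ) + 1 ≠ j := fun e => h (Fin.ext (by simpa using e))
      simp only [Function.comp, Fin.cons_succ, mixVec]
      rw [Equiv.swap_apply_of_ne_of_ne (Fin.succ_ne_zero i) h]
      simp only [Fin.val_succ]
      by_cases h2 : (i : ℕ) < j
      · rw [if_pos h2, if_pos (by omega)]
      · rw [if_neg h2, if_neg (by omega)]

theorem symm_tail (S : MASetup m W) (u : W) (v : Fin (m + 1) → W)
    (σ : Equiv.Perm (Fin (m + 1))) :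
    S.B (Fin.cons u (v ∘ σ)) = S.B (Fin.cons u v) := by
  rw [← S.symm (Fin.cons u v) (Equiv.Perm.decomposeFin.symm (0, σ))]
  congr 1
  funext i
  refine Fin.cases ?_ (fun i => ?_) i
  · simp
  · simp [Equiv.Perm.decomposeFin_symm_apply_succ]

theorem B_cons_sub (S : MASetup m W) (a b : W) (v : Fin (m + 1) → W) :
    S.B (Fin.cons (a - b) v) = S.B (Fin.cons a v) - S.B (Fin.cons b v) := by
  have h := congrArg (fun f => f v) (S.B.curryLeft.map_sub a b)
  exact h

theorem B_cons_cons_sub (S : MASetup m W) (u a b : W) (v : Fin m → W) :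
    S.B (Fin.cons u (Fin.cons (a - b) v)) =
      S.B (Fin.cons u (Fin.cons a v)) - S.B (Fin.cons u (Fin.cons b v)) := by
  have h := congrArg (fun f => f v) ((S.B.curryLeft u).curryLeft.map_sub a b)
  exact h

theorem B_cons_comb (S : MASetup m W) (t s : ℝ) (a b : W) (v : Fin (m + 1) → W) :
    S.B (Fin.cons (t • a + s • b) v) = t * S.B (Fin.cons a v) + s * S.B (Fin.cons b v) := by
  rw [S.B.cons_add, S.B.cons_smul, S.B.cons_smul]
  rfl

/-- Telescoping. -/
theorem sum_eq (S : MASetup m W) (φ ψ : W) :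
    ∑ j ∈ Finset.range (m + 2), S.B (Fin.cons (φ - ψ) (mixVec φ ψ j)) =
      S.B (fun _ => φ) - S.B (fun _ => ψ) := by
  have h : ∀ j ∈ Finset.range (m + 2), S.B (Fin.cons (φ - ψ) (mixVec φ ψ j)) =
      S.B (mixVec φ ψ (j + 1)) - S.B (mixVec φ ψ j) := by
    intro j hj
    rw [B_cons_sub, cons_mixVec_left, cons_mixVec_right φ ψ j _ (Finset.mem_range.1 hj), S.symm]
  rw [Finset.sum_congr rfl h, Finset.sum_range_sub (fun j => S.B (mixVec φ ψ j))]
  congr 2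
  funext i
  simp [mixVec]

theorem mix_step (S : MASetup m W) {φ χ : W} (hφ : φ ∈ S.F) (hχ : χ ∈ S.F) (j : ℕ)
    (hj : j < m + 1) :
    S.B (Fin.cons (φ - χ) (mixVec φ χ (j + 1))) ≤ S.B (Fin.cons (φ - χ) (mixVec φ χ j)) := by
  have h := S.hodge (φ - χ)
    (Submodule.subset_span (Or.inl ⟨φ, hφ, χ, hχ, rfl⟩)) (mixVec φ χ j)
    (fun i => by unfold mixVec; split_ifs <;> assumption)
  rw [B_cons_cons_sub, cons_mixVec_left, cons_mixVec_right φ χ j _ hj, symm_tail] at h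
  linarith

theorem mix_le (S : MASetup m W) {φ χ : W} (hφ : φ ∈ S.F) (hχ : χ ∈ S.F) (j : ℕ)
    (hj : j < m + 2) :
    S.B (Fin.cons (φ - χ) (mixVec φ χ j)) ≤ S.B (Fin.cons (φ - χ) (fun _ => χ)) := by
  induction j with
  | zero =>
    apply le_of_eq
    congr 2
  | succ j ih => exact (S.mix_step hφ hχ j (by omega)).trans (ih (by omega))

/-- Tangent inequality for the diagonal of `B`. -/
theorem tangent (S : MASetup m W) {φ χ : W} (hφ : φ ∈ S.F) (hχ : χ ∈ S.F) :
    S.B (fun _ => φ) - S.B (fun _ => χ) ≤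
      ((m : ℝ) + 2) * S.B (Fin.cons (φ - χ) (fun _ => χ)) := by
  rw [← S.sum_eq]
  refine (Finset.sum_le_card_nsmul _ _ _
    (fun j hj => S.mix_le hφ hχ j (Finset.mem_range.1 hj))).trans (le_of_eq ?_)
  simp

theorem energy_concave_aux (S : MASetup m W) (ψ : W) {φ₁ φ₂ : W} (h₁ : φ₁ ∈ S.F)
    (h₂ : φ₂ ∈ S.F) {t : ℝ} (ht : t ∈ Set.Icc (0 : ℝ) 1) :
    t * S.energy φ₁ ψ + (1 - t) * S.energy φ₂ ψ ≤
      S.energy (t • φ₁ + (1 - t) • φ₂) ψ := by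
  obtain ⟨h0, h1⟩ := ht
  have hχ : t • φ₁ + (1 - t) • φ₂ ∈ S.F := S.Fconv h₁ h₂ h0 (by linarith) (by ring)
  have e := S.B_cons_comb t (1 - t) φ₁ φ₂ (fun _ => t • φ₁ + (1 - t) • φ₂)
  have T₁ := S.tangent h₁ hχ
  have T₂ := S.tangent h₂ hχ
  rw [B_cons_sub, e] at T₁ T₂
  have key : t * S.B (fun _ => φ₁) + (1 - t) * S.B (fun _ => φ₂) ≤
      S.B (fun _ => t • φ₁ + (1 - t) • φ₂) := by
    have a := mul_le_mul_of_nonneg_left T₁ h0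
    have b := mul_le_mul_of_nonneg_left T₂ (sub_nonneg.2 h1)
    linarith
  unfold energy
  rw [sum_eq, sum_eq, sum_eq]
  have hm : (0 : ℝ) ≤ ((m : ℝ) + 2)⁻¹ := by positivity
  have c := mul_le_mul_of_nonneg_left key hm
  linarith

end MASetup

/-- for every `ψ ∈ F`, the energy `φ ↦ E(φ, ψ)` is concave on `F`;
equivalently, `φ ↦ J_ψ(φ)` is convex on `F`. -/
theorem energy_concave {m : ℕ} {W : Type*} [AddCommGroup W] [Module ℝ W]
    (S : MASetup m W) {ψ : W} (hψ : ψ ∈ S.F) :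
    (∀ φ₁ ∈ S.F, ∀ φ₂ ∈ S.F, ∀ t ∈ Set.Icc (0 : ℝ) 1,
        t * S.energy φ₁ ψ + (1 - t) * S.energy φ₂ ψ ≤
          S.energy (t • φ₁ + (1 - t) • φ₂) ψ) ∧
      ∀ φ₁ ∈ S.F, ∀ φ₂ ∈ S.F, ∀ t ∈ Set.Icc (0 : ℝ) 1,
        S.Jfun ψ (t • φ₁ + (1 - t) • φ₂) ≤ t * S.Jfun ψ φ₁ + (1 - t) * S.Jfun ψ φ₂ := by
  refine ⟨fun φ₁ h₁ φ₂ h₂ t ht => S.energy_concave_aux ψ h₁ h₂ ht,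
    fun φ₁ h₁ φ₂ h₂ t ht => ?_⟩
  have h := S.energy_concave_aux ψ h₁ h₂ ht
  unfold MASetup.Jfun
  rw [S.B_cons_sub, S.B_cons_sub, S.B_cons_sub, S.B_cons_comb]
  linarith
end

section
/- For all φ, ψ ∈ F one has I(φ, ψ) = J_ψ(φ) + J_φ(ψ), and the chain of inequalities n⁻¹·J_φ(ψ) ≤ J_ψ(φ) ≤ I(φ, ψ) ≤ (n+1)·J_ψ(φ). -/
open Finset

namespace MASetup

theorem aux_symm_tail {m : ℕ} {W : Type*} [AddCommGroup W] [Module ℝ W]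
    (S : MASetup m W) (u : W) (g : Fin (m + 1) → W) (τ : Equiv.Perm (Fin (m + 1))) :
    S.B (Fin.cons u (g ∘ τ)) = S.B (Fin.cons u g) := by
  rw [← S.symm (Fin.cons u g) (Equiv.Perm.decomposeFin.symm (0, τ))]
  congr 1
  funext i
  refine Fin.cases ?_ (fun k => ?_) i
  · simp
  · simp

theorem aux_mix_rev {m : ℕ} {W : Type*} [AddCommGroup W] [Module ℝ W]
    (S : MASetup m W) (u φ ψ : W) (j : ℕ) (hj : j < m + 2) :
    S.B (Fin.cons u (mixVec ψ φ (m + 2 - 1 - j))) = S.B (Fin.cons u (mixVec φ ψ j)) := by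
  rw [← aux_symm_tail S u (mixVec φ ψ j) Fin.revPerm]
  congr 2
  funext i
  simp only [mixVec, Function.comp, Fin.revPerm_apply, Fin.val_rev]
  have := i.2
  by_cases h : (i : ℕ) < m + 2 - 1 - j
  · rw [if_pos h, if_neg (by omega)]
  · rw [if_neg h, if_pos (by omega)]

theorem aux_neg {m : ℕ} {W : Type*} [AddCommGroup W] [Module ℝ W]
    (S : MASetup m W) (φ ψ : W) (g : Fin (m + 1) → W) :
    S.B (Fin.cons (ψ - φ) g) = - S.B (Fin.cons (φ - ψ) g) := by
  have h := S.B.cons_smul g (-1) (φ - ψ)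
  simpa using h

theorem aux_energy {m : ℕ} {W : Type*} [AddCommGroup W] [Module ℝ W]
    (S : MASetup m W) (φ ψ : W) : S.energy ψ φ = - S.energy φ ψ := by
  unfold energy
  rw [← Finset.sum_range_reflect, ← mul_neg, ← Finset.sum_neg_distrib]
  congr 1
  refine Finset.sum_congr rfl fun j hj => ?_
  rw [aux_mix_rev S _ φ ψ j (Finset.mem_range.1 hj), aux_neg]

theorem aux_step {m : ℕ} {W : Type*} [AddCommGroup W] [Module ℝ W]
    (S : MASetup m W) {φ ψ : W} (hφ : φ ∈ S.F) (hψ : ψ ∈ S.F) (j : ℕ) :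
    S.B (Fin.cons (φ - ψ) (mixVec φ ψ (j + 1))) ≤ S.B (Fin.cons (φ - ψ) (mixVec φ ψ j)) := by
  by_cases hj : j < m + 1
  · let p : Fin (m + 1) := ⟨j, hj⟩
    let v : Fin (m + 2) → W := Fin.cons (φ - ψ) (mixVec φ ψ j)
    have hF : ∀ i : Fin (m + 1), v i.succ ∈ S.F := by
      intro i
      simp only [v, Fin.cons_succ, mixVec]
      split_ifs <;> assumption
    have h1 : (Fin.cons (φ - ψ) (mixVec φ ψ (j + 1)) : Fin (m + 2) → W)
        = Function.update v p.succ φ := by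
      rw [← Fin.cons_update]
      congr 1
      funext i
      by_cases hi : i = p
      · subst hi; simp [mixVec, p]
      · have : (i : ℕ) ≠ j := fun h => hi (Fin.ext h)
        rw [Function.update_of_ne hi]
        simp only [mixVec]
        congr 1
        apply propext
        omega
    have h2 : v = Function.update v p.succ ψ := by
      symm
      rw [Function.update_eq_self_iff]
      simp only [v, Fin.cons_succ]
      simp [mixVec, p]
    have h3 := S.B.map_update_sub v p.succ φ ψ
    rw [← h1, ← h2] at h3
    have h4 : S.B (Function.update v p.succ (φ - ψ)) ≤ 0 := by
      set w := Function.update v p.succ (φ - ψ) with hw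
      rw [← S.symm w (Equiv.swap (Fin.succ 0) p.succ)]
      have h5 : w ∘ (Equiv.swap (Fin.succ 0) p.succ) = Fin.cons (φ - ψ) (Fin.cons (φ - ψ)
          (fun i : Fin m => w (Equiv.swap (Fin.succ 0) p.succ i.succ.succ))) := by
        funext i
        refine Fin.cases ?_ (fun k => Fin.cases ?_ (fun l => ?_) k) i
        · simp only [Function.comp, Fin.cons_zero]
          rw [Equiv.swap_apply_of_ne_of_ne (Fin.succ_ne_zero _).symm (Fin.succ_ne_zero _).symm]
          rw [hw, Function.update_of_ne (Fin.succ_ne_zero _).symm]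
          rfl
        · simp only [Function.comp, Fin.cons_zero, Fin.cons_succ]
          rw [Equiv.swap_apply_left, hw, Function.update_self]
        · simp only [Function.comp, Fin.cons_succ]
      rw [h5]
      refine S.hodge _ (Submodule.subset_span (Or.inl ⟨φ, hφ, ψ, hψ, rfl⟩)) _ fun i => ?_
      have hne : Equiv.swap (Fin.succ 0) p.succ i.succ.succ ≠ p.succ := by
        rw [Ne, Equiv.swap_apply_eq_iff, Equiv.swap_apply_right]
        intro h
        exact Fin.succ_ne_zero _ (Fin.succ_injective _ h)
      have hz : Equiv.swap (Fin.succ 0) p.succ i.succ.succ ≠ 0 := by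
        rw [Ne, Equiv.swap_apply_eq_iff,
          Equiv.swap_apply_of_ne_of_ne (Fin.succ_ne_zero _).symm (Fin.succ_ne_zero _).symm]
        exact Fin.succ_ne_zero _
      rw [hw, Function.update_of_ne hne]
      obtain ⟨k, hk⟩ := Fin.exists_succ_eq.2 hz
      rw [← hk]
      exact hF k
    change _ ≤ S.B v
    linarith
  · apply le_of_eq
    congr 2
    funext i
    have := i.2
    simp only [mixVec]
    rw [if_pos (by omega), if_pos (by omega)]

end MASetup

/-- `I(φ, ψ) = J_ψ(φ) + J_φ(ψ)` and
`n⁻¹ J_φ(ψ) ≤ J_ψ(φ) ≤ I(φ, ψ) ≤ (n+1) J_ψ(φ)` with `n = m + 1`. -/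
theorem Ifun_eq_Jfun_add_Jfun {m : ℕ} {W : Type*} [AddCommGroup W] [Module ℝ W]
    (S : MASetup m W) {φ ψ : W} (hφ : φ ∈ S.F) (hψ : ψ ∈ S.F) :
    S.Ifun φ ψ = S.Jfun ψ φ + S.Jfun φ ψ ∧
      ((m : ℝ) + 1)⁻¹ * S.Jfun φ ψ ≤ S.Jfun ψ φ ∧
      S.Jfun ψ φ ≤ S.Ifun φ ψ ∧
      S.Ifun φ ψ ≤ ((m : ℝ) + 2) * S.Jfun ψ φ := by

  classical
  set a : ℕ → ℝ := fun j => S.B (Fin.cons (φ - ψ) (MASetup.mixVec φ ψ j)) with ha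
  have hanti : Antitone a := antitone_nat_of_succ_le fun j => S.aux_step hφ hψ j
  have h0 : S.B (Fin.cons (φ - ψ) fun _ => ψ) = a 0 := by
    simp only [ha]; congr 2
  have hn : S.B (Fin.cons (φ - ψ) fun _ => φ) = a (m + 1) := by
    simp only [ha]; congr 2
    funext i
    simp only [MASetup.mixVec]
    rw [if_pos i.2]
  have hI : S.Ifun φ ψ = a 0 - a (m + 1) := by rw [MASetup.Ifun, h0, hn]
  have hJ1 : S.Jfun ψ φ = a 0 - S.energy φ ψ := by rw [MASetup.Jfun, h0]
  have hJ2 : S.Jfun φ ψ = S.energy φ ψ - a (m + 1) := by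
    rw [MASetup.Jfun, S.aux_energy φ ψ, S.aux_neg φ ψ, hn]; ring
  have hpos : (0 : ℝ) < (m : ℝ) + 2 := by positivity
  have hpos1 : (0 : ℝ) < (m : ℝ) + 1 := by positivity
  have hE : ((m : ℝ) + 2) * S.energy φ ψ = ∑ j ∈ Finset.range (m + 2), a j := by
    rw [MASetup.energy, mul_inv_cancel_left₀ hpos.ne']
  have hup : ∑ j ∈ Finset.range (m + 1), a j ≤ ((m : ℝ) + 1) * a 0 := by
    have := Finset.sum_le_card_nsmul (Finset.range (m + 1)) a (a 0)
      fun j _ => hanti (Nat.zero_le j)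
    simpa using this
  have hlow : ((m : ℝ) + 2) * a (m + 1) ≤ ∑ j ∈ Finset.range (m + 2), a j := by
    have := Finset.card_nsmul_le_sum (Finset.range (m + 2)) a (a (m + 1))
      fun j hj => hanti (by have := Finset.mem_range.1 hj; omega)
    simpa using this
  have hle : a (m + 1) ≤ S.energy φ ψ := by
    rw [← hE] at hlow
    exact le_of_mul_le_mul_left hlow hpos
  rw [Finset.sum_range_succ] at hE
  rw [hI, hJ1, hJ2]
  refine ⟨by ring, ?_, by linarith, by linarith⟩
  rw [inv_mul_le_iff₀ hpos1]
  linarith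
end

section
/- For all φ, ψ ∈ F and all t ∈ [0,1], one has I(t·φ + (1−t)·ψ, ψ) ≤ n·t²·I(φ, ψ). -/
open Finset

namespace MASetup

variable {m : ℕ} {W : Type*} [AddCommGroup W] [Module ℝ W]

lemma aux_nonpos (S : MASetup m W) {u : W}
    (hu : u ∈ Submodule.span ℝ ({x | ∃ φ ∈ S.F, ∃ ψ ∈ S.F, x = φ - ψ} ∪ {S.one}))
    (v : Fin (m + 1) → W) (hv : ∀ i, v i ∈ S.F) (i : Fin (m + 1)) :
    S.B.curryLeft u (Function.update v i u) ≤ 0 := by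
  have key := S.hodge u hu
    (fun j => v (Equiv.swap 0 i j.succ)) (fun j => hv _)
  have h2 := S.symm (Fin.cons u (Function.update v i u)) (Equiv.swap (Fin.succ 0) i.succ)
  rw [MultilinearMap.curryLeft_apply, ← h2]
  convert key using 2
  funext k
  refine Fin.cases ?_ (fun k => ?_) k
  · have : Equiv.swap (Fin.succ 0) i.succ 0 = 0 :=
      Equiv.swap_apply_of_ne_of_ne (Fin.succ_ne_zero _).symm (Fin.succ_ne_zero _).symm
    rw [Function.comp_apply, this]; simp
  · have : Equiv.swap (Fin.succ 0) i.succ k.succ = (Equiv.swap 0 i k).succ :=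
      ((Fin.succ_injective _).map_swap 0 i k).symm
    rw [Function.comp_apply, this, Fin.cons_succ, Fin.cons_succ]
    refine Fin.cases ?_ (fun k => ?_) k
    · simp
    · have hne : Equiv.swap 0 i k.succ ≠ i := by
        intro h
        have := (Equiv.swap 0 i).injective (h.trans (Equiv.swap_apply_left 0 i).symm)
        exact Fin.succ_ne_zero _ this
      rw [Function.update_of_ne hne, Fin.cons_succ]

lemma aux_step_s6 (S : MASetup m W) (u x y : W) (c : ℝ) (h : y = x + c • u)
    (v : Fin (m + 1) → W) (i : Fin (m + 1)) :
    S.B.curryLeft u (Function.update v i y) =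
      S.B.curryLeft u (Function.update v i x) + c * S.B.curryLeft u (Function.update v i u) := by
  rw [h, MultilinearMap.map_update_add, MultilinearMap.map_update_smul, smul_eq_mul]

lemma aux_anti (S : MASetup m W) {u : W}
    (hu : u ∈ Submodule.span ℝ ({x | ∃ φ ∈ S.F, ∃ ψ ∈ S.F, x = φ - ψ} ∪ {S.one}))
    (v w : Fin (m + 1) → W) (hv : ∀ i, v i ∈ S.F) (hw : ∀ i, w i ∈ S.F)
    (h : ∀ i, ∃ c : ℝ, 0 ≤ c ∧ w i = v i + c • u) :
    S.B.curryLeft u w ≤ S.B.curryLeft u v := by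
  have key : ∀ s : Finset (Fin (m + 1)),
      S.B.curryLeft u (s.piecewise w v) ≤ S.B.curryLeft u v := by
    intro s
    induction s using Finset.induction_on with
    | empty => simp
    | insert j s hj ih =>
      obtain ⟨c, hc, hcw⟩ := h j
      have hF : ∀ i, s.piecewise w v i ∈ S.F := fun i => by
        by_cases hi : i ∈ s <;> simp [hi, hv, hw]
      have h1 := S.aux_step_s6 u _ _ c hcw (s.piecewise w v) j
      have h2 : Function.update (s.piecewise w v) j (v j) = s.piecewise w v := by
        rw [Function.update_eq_self_iff]; simp [hj]
      rw [Finset.piecewise_insert, h1, h2]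
      nlinarith [mul_nonneg hc (neg_nonneg.2 (S.aux_nonpos hu _ hF j))]
  simpa using key Finset.univ

end MASetup

/-- `I(tφ + (1-t)ψ, ψ) ≤ n t² I(φ, ψ)` for `t ∈ [0,1]`, `n = m+1`. -/
theorem Ifun_segment {m : ℕ} {W : Type*} [AddCommGroup W] [Module ℝ W]
    (S : MASetup m W) {φ ψ : W} (hφ : φ ∈ S.F) (hψ : ψ ∈ S.F)
    {t : ℝ} (ht : t ∈ Set.Icc (0 : ℝ) 1) :
    S.Ifun (t • φ + (1 - t) • ψ) ψ ≤ ((m : ℝ) + 1) * t ^ 2 * S.Ifun φ ψ := by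
  obtain ⟨ht0, ht1⟩ := ht
  obtain ⟨u, hu⟩ : ∃ u, u = φ - ψ := ⟨_, rfl⟩
  have huW : u ∈ Submodule.span ℝ ({x | ∃ φ ∈ S.F, ∃ ψ ∈ S.F, x = φ - ψ} ∪ {S.one}) :=
    Submodule.subset_span (Or.inl ⟨φ, hφ, ψ, hψ, hu⟩)
  obtain ⟨χ, hχ⟩ : ∃ χ, χ = t • φ + (1 - t) • ψ := ⟨_, rfl⟩
  have hχF : χ ∈ S.F := hχ ▸ S.Fconv hφ hψ ht0 (by linarith) (by ring)
  have e1 : χ = ψ + t • u := by rw [hχ, hu]; module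
  have e2 : φ = χ + (1 - t) • u := by rw [hχ, hu]; module
  have e3 : φ = ψ + (1 : ℝ) • u := by rw [hu]; module
  have e4 : χ - ψ = t • u := by rw [e1]; module
  have hI : S.Ifun φ ψ = S.B.curryLeft u (fun _ => ψ) - S.B.curryLeft u (fun _ => φ) := by
    rw [MASetup.Ifun, ← hu, MultilinearMap.curryLeft_apply, MultilinearMap.curryLeft_apply]
  have hI' : S.Ifun χ ψ =
      t * (S.B.curryLeft u (fun _ => ψ) - S.B.curryLeft u (fun _ => χ)) := by
    rw [MASetup.Ifun, e4, ← MultilinearMap.curryLeft_apply, ← MultilinearMap.curryLeft_apply,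
      map_smul]
    simp only [smul_apply, smul_eq_mul]
    ring
  have key : ∀ s : Finset (Fin (m + 1)),
      S.B.curryLeft u (fun _ => ψ) - S.B.curryLeft u (s.piecewise (fun _ => χ) (fun _ => ψ))
        ≤ s.card * (t * S.Ifun φ ψ) := by
    intro s
    induction s using Finset.induction_on with
    | empty => simp
    | insert j s hj ih =>
      set v := s.piecewise (fun _ => χ) (fun _ => ψ) with hv
      have hvi : ∀ i, v i = χ ∨ v i = ψ := fun i => by
        by_cases hi : i ∈ s <;> simp [hv, hi]
      have hvF : ∀ i, v i ∈ S.F := fun i => by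
        rcases hvi i with h | h <;> rw [h] <;> assumption
      have h1 := S.aux_step_s6 u _ _ t e1 v j
      have h3 := S.aux_step_s6 u _ _ 1 e3 v j
      have h2 : Function.update v j ψ = v := by
        rw [Function.update_eq_self_iff]; simp [hv, hj]
      have h4 : S.B.curryLeft u v ≤ S.B.curryLeft u (fun _ => ψ) := by
        refine S.aux_anti huW _ _ (fun _ => hψ) hvF fun i => ?_
        rcases hvi i with h | h
        · exact ⟨t, ht0, h.trans e1⟩
        · exact ⟨0, le_rfl, by simp [h]⟩
      have h5 : S.B.curryLeft u (fun _ => φ) ≤ S.B.curryLeft u (Function.update v j φ) := by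
        refine S.aux_anti huW _ _ (fun i => ?_) (fun _ => hφ) fun i => ?_
        · by_cases hi : i = j
          · subst hi; simpa using hφ
          · simpa [hi] using hvF i
        · by_cases hi : i = j
          · subst hi; exact ⟨0, le_rfl, by simp⟩
          · rw [Function.update_of_ne hi]
            rcases hvi i with h | h <;> rw [h]
            · exact ⟨1 - t, by linarith, e2⟩
            · exact ⟨1, by norm_num, e3⟩
      rw [Finset.piecewise_insert, ← hv, h1, h2, Finset.card_insert_of_notMem hj]
      rw [h2] at h3
      push_cast
      have h6 : -S.B.curryLeft u (Function.update v j u) ≤ S.Ifun φ ψ := by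
        rw [hI]; linarith
      nlinarith [mul_le_mul_of_nonneg_left h6 ht0]
  have k := key Finset.univ
  simp only [Finset.piecewise_univ, Finset.card_univ, Fintype.card_fin] at k
  push_cast at k
  rw [← hχ, hI']
  nlinarith [mul_le_mul_of_nonneg_left k ht0]
end

section
/- There exists a constant C > 0 depending only on n such that, for every abstract Monge–Ampère pairing setup (W, B, 𝟙, F) as in the context and all φ₁, φ₂, ψ ∈ F: −B(φ₁−φ₂, φ₁−φ₂, ψ, …, ψ) ≤ C · I(φ₁, φ₂)^{1/2^{n−1}} · (max{I(φ₁, ψ), I(φ₂, ψ)})^{1 − 1/2^{n−1}}, where ψ occupies the last n−1 slots of B. -/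
open Finset

namespace MASetup

universe u

variable {m : ℕ} {W : Type u} [AddCommGroup W] [Module ℝ W]

/-- Minus the pairing. -/
noncomputable def Q (S : MASetup m W) (u v : W) (g : Fin m → W) : ℝ :=
  -S.B (Fin.cons u (Fin.cons v g))

lemma Q_comm (S : MASetup m W) (u v : W) (g : Fin m → W) : S.Q u v g = S.Q v u g := by
  unfold Q
  rw [← S.symm (Fin.cons u (Fin.cons v g)) (Equiv.swap 0 1)]
  congr 2
  funext k
  refine Fin.cases ?_ (fun k => Fin.cases ?_ (fun k => ?_) k) k
  · simp [Function.comp]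
  · simp [Function.comp]
  · have h : (Equiv.swap (0 : Fin (m + 2)) 1) k.succ.succ = k.succ.succ := by
      apply Equiv.swap_apply_of_ne_of_ne
      · exact Fin.succ_ne_zero _
      · intro h
        exact Fin.succ_ne_zero k (Fin.succ_injective _ h)
    simp [Function.comp, h]

lemma Q_swap (S : MASetup m W) (u v w : W) (g : Fin m → W) (i : Fin m) :
    S.Q u v (Function.update g i w) = S.Q u w (Function.update g i v) := by
  unfold Q
  rw [← S.symm (Fin.cons u (Fin.cons v (Function.update g i w))) (Equiv.swap 1 i.succ.succ)]
  congr 2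
  funext k
  refine Fin.cases ?_ (fun k => Fin.cases ?_ (fun k => ?_) k) k
  · have h : (Equiv.swap (1 : Fin (m + 2)) i.succ.succ) 0 = 0 := by
      apply Equiv.swap_apply_of_ne_of_ne
      · simp
      · exact (Fin.succ_ne_zero _).symm
    simp [Function.comp, h]
  · simp [Function.comp, -Fin.cons_update]
  · by_cases hk : k = i
    · subst hk
      simp only [Function.comp, Equiv.swap_apply_right, Fin.cons_succ, Function.update_self]
      rfl
    · have h : (Equiv.swap (1 : Fin (m + 2)) i.succ.succ) k.succ.succ = k.succ.succ := by
        apply Equiv.swap_apply_of_ne_of_ne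
        · intro h
          exact Fin.succ_ne_zero k (Fin.succ_injective _ h)
        · intro h
          exact hk (Fin.succ_injective _ (Fin.succ_injective _ h))
      simp [Function.comp, h, hk]

lemma Q_add_left (S : MASetup m W) (u u' v : W) (g : Fin m → W) :
    S.Q (u + u') v g = S.Q u v g + S.Q u' v g := by
  unfold Q
  rw [MultilinearMap.cons_add]; ring

lemma Q_smul_left (S : MASetup m W) (c : ℝ) (u v : W) (g : Fin m → W) :
    S.Q (c • u) v g = c * S.Q u v g := by
  unfold Q
  rw [MultilinearMap.cons_smul]; simp

lemma Q_add_right (S : MASetup m W) (u v v' : W) (g : Fin m → W) :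
    S.Q u (v + v') g = S.Q u v g + S.Q u v' g := by
  rw [Q_comm, Q_add_left, Q_comm S v, Q_comm S v']

lemma Q_smul_right (S : MASetup m W) (c : ℝ) (u v : W) (g : Fin m → W) :
    S.Q u (c • v) g = c * S.Q u v g := by
  rw [Q_comm, Q_smul_left, Q_comm S v]

lemma Q_sub_right (S : MASetup m W) (u v v' : W) (g : Fin m → W) :
    S.Q u (v - v') g = S.Q u v g - S.Q u v' g := by
  have := S.Q_add_right u (v - v') v' g
  rw [sub_add_cancel] at this
  linarith

lemma Q_sub_left (S : MASetup m W) (u v v' : W) (g : Fin m → W) :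
    S.Q (v - v') u g = S.Q v u g - S.Q v' u g := by
  rw [Q_comm, Q_sub_right, Q_comm S u v, Q_comm S u v']

lemma Q_upd_sub (S : MASetup m W) (u v x y : W) (g : Fin m → W) (i : Fin m) :
    S.Q u v (Function.update g i (x - y)) =
      S.Q u v (Function.update g i x) - S.Q u v (Function.update g i y) := by
  rw [Q_swap, Q_sub_right, Q_swap, Q_swap S u y]

lemma Q_upd_add (S : MASetup m W) (u v x y : W) (g : Fin m → W) (i : Fin m) :
    S.Q u v (Function.update g i (x + y)) =
      S.Q u v (Function.update g i x) + S.Q u v (Function.update g i y) := by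
  rw [Q_swap, Q_add_right, Q_swap, Q_swap S u y]

lemma Q_upd_smul (S : MASetup m W) (c : ℝ) (u v x : W) (g : Fin m → W) (i : Fin m) :
    S.Q u v (Function.update g i (c • x)) = c * S.Q u v (Function.update g i x) := by
  rw [Q_swap, Q_smul_right, Q_swap]

lemma sub_mem_W0 (S : MASetup m W) {a b : W} (ha : a ∈ S.F) (hb : b ∈ S.F) : a - b ∈ S.W0 :=
  Submodule.subset_span (Or.inl ⟨a, ha, b, hb, rfl⟩)

lemma Q_nonneg (S : MASetup m W) {u : W} (hu : u ∈ S.W0) {g : Fin m → W} (hg : ∀ i, g i ∈ S.F) :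
    0 ≤ S.Q u u g := by
  have := S.hodge u hu g hg
  unfold Q; linarith

/-- Cauchy–Schwarz. -/
lemma Q_cs (S : MASetup m W) {u v : W} (hu : u ∈ S.W0) (hv : v ∈ S.W0) {g : Fin m → W}
    (hg : ∀ i, g i ∈ S.F) : S.Q u v g ^ 2 ≤ S.Q u u g * S.Q v v g := by
  have h : ∀ t : ℝ, 0 ≤ S.Q v v g * (t * t) + (2 * S.Q u v g) * t + S.Q u u g := by
    intro t
    have := S.Q_nonneg (S.W0.add_mem hu (S.W0.smul_mem t hv)) hg
    simp only [Q_add_left, Q_add_right, Q_smul_left, Q_smul_right, Q_comm S v u] at this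
    linarith
  have := discrim_le_zero h
  unfold discrim at this
  nlinarith

lemma Q_add_le (S : MASetup m W) {u v : W} (hu : u ∈ S.W0) (hv : v ∈ S.W0) {g : Fin m → W}
    (hg : ∀ i, g i ∈ S.F) : S.Q (u + v) (u + v) g ≤ 2 * S.Q u u g + 2 * S.Q v v g := by
  have := S.Q_nonneg (S.W0.sub_mem hu hv) hg
  simp only [Q_add_left, Q_add_right, Q_sub_left, Q_sub_right, Q_comm S v u] at this ⊢
  linarith

lemma Q_sub_le (S : MASetup m W) {u v : W} (hu : u ∈ S.W0) (hv : v ∈ S.W0) {g : Fin m → W}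
    (hg : ∀ i, g i ∈ S.F) : S.Q (u - v) (u - v) g ≤ 2 * S.Q u u g + 2 * S.Q v v g := by
  have := S.Q_nonneg (S.W0.add_mem hu hv) hg
  simp only [Q_add_left, Q_add_right, Q_sub_left, Q_sub_right, Q_comm S v u] at this ⊢
  linarith

lemma upd_mem {A : Set W} {g : Fin m → W} (hg : ∀ i, g i ∈ A) (i : Fin m) {x : W} (hx : x ∈ A) :
    ∀ j, Function.update g i x j ∈ A := by
  intro j
  by_cases h : j = i
  · subst h; simpa using hx
  · simpa [h] using hg j

/-- Monotonicity in the slots. -/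
lemma Q_mono (S : MASetup m W) {a b x : W} (ha : a ∈ S.F) (hb : b ∈ S.F) (hx : x ∈ S.F)
    {g g' : Fin m → W} (hg : ∀ i, g i ∈ S.F)
    (h : ∀ i, g' i = g i ∨ (g i = b ∧ g' i = a)) :
    S.Q (a - b) x g ≤ S.Q (a - b) x g' := by
  have hg' : ∀ i, g' i ∈ S.F := by
    intro i
    rcases h i with h | ⟨_, h⟩
    · rw [h]; exact hg i
    · rw [h]; exact ha
  have key : ∀ T : Finset (Fin m), S.Q (a - b) x g ≤ S.Q (a - b) x (T.piecewise g' g) := by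
    intro T
    induction T using Finset.induction_on with
    | empty => simp
    | insert i T hi ih =>
      refine ih.trans ?_
      rw [Finset.piecewise_insert]
      have hP : ∀ j, T.piecewise g' g j ∈ S.F := by
        intro j
        by_cases hj : j ∈ T
        · simpa [hj] using hg' j
        · simpa [hj] using hg j
      have hPi : T.piecewise g' g i = g i := by simp [hi]
      rcases h i with h | ⟨h1, h2⟩
      · rw [h, ← hPi, Function.update_eq_self]
      · have e : T.piecewise g' g = Function.update (T.piecewise g' g) i b := by
          rw [← h1, ← hPi, Function.update_eq_self]
        rw [h2]
        conv_lhs => rw [e]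
        have := S.Q_upd_sub (a - b) x a b (T.piecewise g' g) i
        rw [Q_swap] at this
        have h3 := S.Q_nonneg (S.sub_mem_W0 ha hb) (upd_mem hP i hx)
        linarith
  have := key Finset.univ
  simpa using this

lemma cons_const (x : W) : (Fin.cons x (fun _ : Fin m => x) : Fin (m + 1) → W) = fun _ => x := by
  funext k
  refine Fin.cases ?_ (fun k => ?_) k <;> simp

lemma Ifun_eq (S : MASetup m W) (a b : W) :
    S.Ifun a b = S.Q (a - b) a (fun _ => a) - S.Q (a - b) b (fun _ => b) := by
  unfold Ifun Q
  rw [cons_const, cons_const]; ring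

lemma Q_le_I (S : MASetup m W) {a b : W} (ha : a ∈ S.F) (hb : b ∈ S.F)
    {g : Fin m → W} (hg : ∀ i, g i = a ∨ g i = b) :
    S.Q (a - b) (a - b) g ≤ S.Ifun a b := by
  have hgF : ∀ i, g i ∈ S.F := by
    intro i
    rcases hg i with h | h <;> rw [h] <;> assumption
  rw [Q_sub_right, Ifun_eq]
  have h1 : S.Q (a - b) a g ≤ S.Q (a - b) a (fun _ => a) := by
    apply S.Q_mono ha hb ha hgF
    intro i
    rcases hg i with h | h
    · left; exact h.symm
    · right; exact ⟨h, rfl⟩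
  have h2 : S.Q (a - b) b (fun _ => b) ≤ S.Q (a - b) b g := by
    apply S.Q_mono ha hb hb (fun _ => hb)
    intro i
    rcases hg i with h | h
    · right; exact ⟨rfl, h⟩
    · left; exact h
  linarith

lemma Ifun_nonneg (S : MASetup m W) {a b : W} (ha : a ∈ S.F) (hb : b ∈ S.F) : 0 ≤ S.Ifun a b :=
  (S.Q_nonneg (S.sub_mem_W0 ha hb) (fun _ => ha)).trans
    (S.Q_le_I ha hb (g := fun _ => a) (fun _ => Or.inl rfl))

lemma young {P a b δ : ℝ} (hδ : 0 < δ) (ha : 0 ≤ a) (hb : 0 ≤ b) (h : P ^ 2 ≤ a * b) :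
    |P| ≤ a / (4 * δ) + δ * b := by
  apply abs_le_of_sq_le_sq
  · have : a * b = 4 * (a / (4 * δ)) * (δ * b) := by field_simp
    nlinarith [sq_nonneg (a / (4 * δ) - δ * b)]
  · positivity

/-- The a priori bound with small error. -/
lemma apriori (m b : ℕ) : ∀ ε : ℝ, 0 < ε → ∃ C : ℝ, 0 ≤ C ∧
    ∀ (W : Type u) [AddCommGroup W] [Module ℝ W] (S : MASetup m W) (p q r : W),
      p ∈ S.F → q ∈ S.F → r ∈ S.F → ∀ M X : ℝ, S.Ifun p r ≤ M →
      (∀ h : Fin m → W, (∀ i, h i ∈ ({p, q, r} : Set W)) → S.Q (q - r) (q - r) h ≤ X) →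
      ∀ h : Fin m → W, (∀ i, h i ∈ ({p, q, r} : Set W)) →
        ∀ T : Finset (Fin m), T.card ≤ b → (∀ i, i ∉ T → h i = p ∨ h i = r) →
          S.Q (p - r) (p - r) h ≤ C * M + ε * X := by
  induction b with
  | zero =>
    intro ε hε
    refine ⟨1, zero_le_one, ?_⟩
    intro W _ _ S p q r hp hq hr M X hM hX h hh T hT hTh
    have hT0 : T = ∅ := by simpa using hT
    subst hT0
    have h1 := S.Q_le_I hp hr (g := h) (fun i => hTh i (by simp))
    have hF : ∀ i, h i ∈ S.F := by
      intro i
      rcases hTh i (by simp) with e | e <;> rw [e] <;> assumption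
    have h2 := (S.Q_nonneg (S.sub_mem_W0 hq hr) hF).trans (hX h hh)
    nlinarith
  | succ b ih =>
    intro ε hε
    set δ : ℝ := ε / 4 with hδ
    have hδ0 : 0 < δ := by positivity
    set K : ℝ := 1 + 2 / (4 * δ) with hK
    have hK0 : 0 < K := by positivity
    obtain ⟨C, hC0, hC⟩ := ih (ε / (2 * K)) (by positivity)
    refine ⟨K * C, by positivity, ?_⟩
    intro W _ _ S p q r hp hq hr M X hM hX h hh T hT hTh
    have hsub : ∀ x ∈ ({p, q, r} : Set W), x ∈ S.F := by
      rintro x (rfl | rfl | rfl) <;> assumption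
    have hF : ∀ i, h i ∈ S.F := fun i => hsub _ (hh i)
    have hX0 := (S.Q_nonneg (S.sub_mem_W0 hq hr) hF).trans (hX h hh)
    have hM0 := (S.Ifun_nonneg hp hr).trans hM
    have hKe : K * (ε / (2 * K)) = ε / 2 := by field_simp
    have hK1 : 1 ≤ K := by
      have : 0 ≤ 2 / (4 * δ) := by positivity
      linarith
    by_cases hTe : T = ∅
    · have h1 := hC W S p q r hp hq hr M X hM hX h hh T (by simp [hTe]) hTh
      have h2 : 0 ≤ C * M + ε / (2 * K) * X := by positivity
      have h3 : K * (C * M + ε / (2 * K) * X) = K * C * M + ε / 2 * X := by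
        rw [← hKe]; ring
      nlinarith
    obtain ⟨i, hi⟩ := Finset.nonempty_iff_ne_empty.mpr hTe
    have hcard : (T.erase i).card ≤ b := by
      rw [Finset.card_erase_of_mem hi]; omega
    have bound : ∀ x : W, (x = p ∨ x = r) →
        S.Q (p - r) (p - r) (Function.update h i x) ≤ C * M + ε / (2 * K) * X := by
      intro x hx
      apply hC W S p q r hp hq hr M X hM hX _ _ (T.erase i) hcard
      · intro j hj
        by_cases hji : j = i
        · subst hji; simpa using hx
        · rw [Function.update_of_ne hji]
          exact hTh j (fun hjT => hj (Finset.mem_erase.mpr ⟨hji, hjT⟩))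
      · apply upd_mem hh
        rcases hx with rfl | rfl <;> simp
    have mix : ∀ x : W, (x = p ∨ x = r) →
        |S.Q (p - r) (q - r) (Function.update h i x)| ≤
          (C * M + ε / (2 * K) * X) / (4 * δ) + δ * X := by
      intro x hx
      have hxA : x ∈ ({p, q, r} : Set W) := by rcases hx with rfl | rfl <;> simp
      have hup := upd_mem hh i hxA
      have hupF := upd_mem hF i (hsub x hxA)
      have n1 := S.Q_nonneg (S.sub_mem_W0 hp hr) hupF
      have n2 := S.Q_nonneg (S.sub_mem_W0 hq hr) hupF
      refine (young hδ0 n1 n2 (S.Q_cs (S.sub_mem_W0 hp hr) (S.sub_mem_W0 hq hr) hupF)).trans ?_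
      have := bound x hx
      have := hX _ hup
      gcongr
    have base : S.Q (p - r) (p - r) h ≤ (C * M + ε / (2 * K) * X) +
        2 * ((C * M + ε / (2 * K) * X) / (4 * δ) + δ * X) := by
      have e0 : h = Function.update h i (h i) := by simp
      have hm := mix p (Or.inl rfl)
      have hm' := mix r (Or.inr rfl)
      have hn : 0 ≤ (C * M + ε / (2 * K) * X) / (4 * δ) + δ * X := by positivity
      have hb := bound r (Or.inr rfl)
      rcases hh i with hq' | hq' | hq'
      · rw [e0, hq']
        have := bound p (Or.inl rfl)
        linarith
      · rw [e0, hq']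
        have s1 := S.Q_upd_sub (p - r) (p - r) q r h i
        rw [Q_swap, Q_upd_sub] at s1
        have a1 := (abs_le.mp hm).2
        have a2 := (abs_le.mp hm').1
        linarith
      · have hq2 : h i = r := hq'
        rw [e0, hq2]
        linarith
    have fin : (C * M + ε / (2 * K) * X) +
        2 * ((C * M + ε / (2 * K) * X) / (4 * δ) + δ * X) =
        K * C * M + (K * (ε / (2 * K))) * X + 2 * δ * X := by
      rw [hK]; ring
    rw [fin, hKe, hδ] at base
    linarith

/-- The a priori bound. -/
lemma apriori' (m : ℕ) : ∃ C : ℝ, 0 < C ∧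
    ∀ (W : Type u) [AddCommGroup W] [Module ℝ W] (S : MASetup m W) (p q r : W),
      p ∈ S.F → q ∈ S.F → r ∈ S.F → ∀ M : ℝ, S.Ifun p r ≤ M → S.Ifun q r ≤ M →
      ∀ h : Fin m → W, (∀ i, h i ∈ ({p, q, r} : Set W)) →
        S.Q (p - r) (p - r) h ≤ C * M ∧ S.Q (q - r) (q - r) h ≤ C * M := by
  obtain ⟨C, hC0, hC⟩ := apriori.{u} m m (1 / 2) (by norm_num)
  refine ⟨4 * C + 1, by positivity, ?_⟩
  intro W _ _ S p q r hp hq hr M hpM hqM h hh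
  have hM0 := (S.Ifun_nonneg hp hr).trans hpM
  have hsub : ∀ x ∈ ({p, q, r} : Set W), x ∈ S.F := by
    rintro x (rfl | rfl | rfl) <;> assumption
  have hcomm : ({q, p, r} : Set W) = {p, q, r} := Set.insert_comm _ _ _
  have hfin : (Set.pi Set.univ (fun _ : Fin m => ({p, q, r} : Set W))).Finite :=
    Set.Finite.pi (fun _ => Set.toFinite _)
  have hne : (Set.pi Set.univ (fun _ : Fin m => ({p, q, r} : Set W))).Nonempty :=
    ⟨h, fun i _ => hh i⟩
  obtain ⟨hf, hf1, hf2⟩ := Set.exists_max_image _ (fun g => S.Q (p - r) (p - r) g) hfin hne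
  obtain ⟨hg, hg1, hg2⟩ := Set.exists_max_image _ (fun g => S.Q (q - r) (q - r) g) hfin hne
  have b1 := hC W S p q r hp hq hr M _ hpM (fun k hk => hg2 k (fun i _ => hk i)) hf
    (fun i => hf1 i trivial) Finset.univ (by simp) (by simp)
  have b2 := hC W S q p r hq hp hr M _ hqM
    (fun k hk => hf2 k (fun i _ => by rw [← hcomm]; exact hk i)) hg
    (fun i => by rw [hcomm]; exact hg1 i trivial) Finset.univ (by simp) (by simp)
  have c1 := hf2 h (fun i _ => hh i)
  have c2 := hg2 h (fun i _ => hh i)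
  have hCM : 0 ≤ C * M := by positivity
  constructor <;> linarith

/-- Passing to midpoints in the slots. -/
lemma Q_mid (S : MASetup m W) (u : W) (A : Set W) {p q : W} (hp : p ∈ A) (hq : q ∈ A) (K : ℝ)
    (hA : ∀ h : Fin m → W, (∀ i, h i ∈ A) → S.Q u u h ≤ K)
    (h : Fin m → W) (hh : ∀ i, h i ∈ A ∨ h i = (1 / 2 : ℝ) • (p + q)) : S.Q u u h ≤ K := by
  have key : ∀ T : Finset (Fin m), ∀ h : Fin m → W,
      (∀ i, h i ∈ A ∨ (i ∈ T ∧ h i = (1 / 2 : ℝ) • (p + q))) → S.Q u u h ≤ K := by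
    intro T
    induction T using Finset.induction_on with
    | empty =>
      intro h hh
      exact hA h (fun i => by simpa using hh i)
    | insert i T hi ih =>
      intro h hh
      have up : ∀ x ∈ A, S.Q u u (Function.update h i x) ≤ K := by
        intro x hx
        apply ih
        intro j
        by_cases hji : j = i
        · subst hji; left; simpa using hx
        · rw [Function.update_of_ne hji]
          rcases hh j with hj | ⟨hj, hj'⟩
          · exact Or.inl hj
          · exact Or.inr ⟨(Finset.mem_insert.mp hj).resolve_left hji, hj'⟩
      have e0 : h = Function.update h i (h i) := by simp
      rcases hh i with hi' | ⟨_, hi'⟩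
      · rw [e0]; exact up _ hi'
      · rw [e0, hi', Q_upd_smul, Q_upd_add]
        have := up p hp
        have := up q hq
        linarith
  exact key Finset.univ h (fun i => by simpa using hh i)

lemma mixVec_succ (a c : W) (k : ℕ) (hk : k < m) :
    (mixVec a c (k + 1) : Fin m → W) = Function.update (mixVec a c k) ⟨k, hk⟩ a := by
  funext j
  by_cases h : j = ⟨k, hk⟩
  · subst h; simp [mixVec]
  · rw [Function.update_of_ne h]
    have : (j : ℕ) ≠ k := fun e => h (Fin.ext e)
    unfold mixVec
    have : (j : ℕ) < k + 1 ↔ (j : ℕ) < k := by omega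
    simp [this]

lemma step_arith {b b' P1 P2 C M : ℝ} (hb : 0 ≤ b) (hM : 0 ≤ C * M)
    (hbM : b ≤ 4 * (C * M)) (h : b' = b + P1 - P2) (hb' : 0 ≤ b')
    (h1 : P1 ^ 2 ≤ 2 * b * (C * M)) (h2 : P2 ^ 2 ≤ 2 * b * (C * M)) :
    b' ^ 2 ≤ 24 * C * M * b := by
  subst h
  nlinarith [sq_nonneg (P1 + P2), sq_nonneg (b - (P1 - P2)), mul_le_mul_of_nonneg_left hbM hb]

/-- The main iterated inequality. -/
lemma iterate_bound (m : ℕ) : ∃ K : ℝ, 0 < K ∧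
    ∀ (W : Type u) [AddCommGroup W] [Module ℝ W] (S : MASetup m W) (p q r : W),
      p ∈ S.F → q ∈ S.F → r ∈ S.F → ∀ M : ℝ, S.Ifun p r ≤ M → S.Ifun q r ≤ M →
        S.Q (p - q) (p - q) (fun _ => r) ^ (2 ^ m) ≤ (K * M) ^ (2 ^ m - 1) * S.Ifun p q := by
  obtain ⟨C, hC0, hC⟩ := apriori'.{u} m
  refine ⟨24 * C, by positivity, ?_⟩
  intro W _ _ S p q r hp hq hr M hpM hqM
  have hM0 := (S.Ifun_nonneg hp hr).trans hpM
  have hCM : 0 ≤ C * M := by positivity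
  set c : W := (1 / 2 : ℝ) • (p + q) with hc
  have hcF : c ∈ S.F := by
    have := S.Fconv hp hq (a := 1 / 2) (b := 1 / 2) (by norm_num) (by norm_num) (by norm_num)
    rwa [← smul_add] at this
  have hsub : ∀ x ∈ ({p, q, r} : Set W), x ∈ S.F := by
    rintro x (rfl | rfl | rfl) <;> assumption
  have hsubc : ∀ x, x ∈ ({p, q, r} : Set W) ∨ x = c → x ∈ S.F := by
    rintro x (h | rfl)
    · exact hsub x h
    · exact hcF
  have hpr := S.sub_mem_W0 hp hr
  have hqr := S.sub_mem_W0 hq hr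
  have hpq := S.sub_mem_W0 hp hq
  have hrc := S.sub_mem_W0 hr hcF
  have bp : ∀ h : Fin m → W, (∀ i, h i ∈ ({p, q, r} : Set W) ∨ h i = c) →
      S.Q (p - r) (p - r) h ≤ C * M :=
    fun h hh => S.Q_mid _ _ (by simp) (by simp) _
      (fun k hk => (hC W S p q r hp hq hr M hpM hqM k hk).1) h hh
  have bq : ∀ h : Fin m → W, (∀ i, h i ∈ ({p, q, r} : Set W) ∨ h i = c) →
      S.Q (q - r) (q - r) h ≤ C * M :=
    fun h hh => S.Q_mid _ _ (by simp) (by simp) _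
      (fun k hk => (hC W S p q r hp hq hr M hpM hqM k hk).2) h hh
  have bu : ∀ h : Fin m → W, (∀ i, h i ∈ ({p, q, r} : Set W) ∨ h i = c) →
      S.Q (p - q) (p - q) h ≤ 4 * (C * M) := by
    intro h hh
    have e : p - q = (p - r) - (q - r) := by abel
    rw [e]
    have := S.Q_sub_le hpr hqr (g := h) (fun i => hsubc _ (hh i))
    have := bp h hh
    have := bq h hh
    linarith
  have bv : ∀ h : Fin m → W, (∀ i, h i ∈ ({p, q, r} : Set W) ∨ h i = c) →
      S.Q (r - c) (r - c) h ≤ C * M := by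
    intro h hh
    have e : r - c = (-(1 / 2) : ℝ) • ((p - r) + (q - r)) := by
      rw [hc]; module
    rw [e, Q_smul_left, Q_smul_right]
    have := S.Q_add_le hpr hqr (g := h) (fun i => hsubc _ (hh i))
    have := bp h hh
    have := bq h hh
    linarith
  have hmix : ∀ k : ℕ, ∀ i, (mixVec r c k : Fin m → W) i ∈ ({p, q, r} : Set W) ∨
      (mixVec r c k : Fin m → W) i = c := by
    intro k i
    unfold mixVec
    split_ifs
    · left; simp
    · right; rfl
  have hmixF : ∀ k : ℕ, ∀ i, (mixVec r c k : Fin m → W) i ∈ S.F := fun k i => hsubc _ (hmix k i)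
  have hb0 : ∀ k : ℕ, 0 ≤ S.Q (p - q) (p - q) (mixVec r c k) :=
    fun k => S.Q_nonneg hpq (hmixF k)
  have step : ∀ k : ℕ, k < m → S.Q (p - q) (p - q) (mixVec r c (k + 1)) ^ 2 ≤
      24 * C * M * S.Q (p - q) (p - q) (mixVec r c k) := by
    intro k hk
    set g : Fin m → W := mixVec r c k with hg
    set i : Fin m := ⟨k, hk⟩ with hi
    have hgi : g i = c := by simp [hg, mixVec, hi]
    have e0 : g = Function.update g i c := by rw [← hgi]; simp
    have hs : S.Q (p - q) (p - q) (mixVec r c (k + 1)) = S.Q (p - q) (p - q) g +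
        S.Q (p - q) (r - c) (Function.update g i p) -
        S.Q (p - q) (r - c) (Function.update g i q) := by
      rw [mixVec_succ r c k hk]
      have s1 := S.Q_upd_sub (p - q) (p - q) r c g i
      rw [Q_swap, Q_upd_sub, ← e0] at s1
      linarith
    have hsum : S.Q (p - q) (p - q) g =
        1 / 2 * (S.Q (p - q) (p - q) (Function.update g i p) +
          S.Q (p - q) (p - q) (Function.update g i q)) := by
      conv_lhs => rw [e0, hc]
      rw [Q_upd_smul, Q_upd_add]
    have upm : ∀ x ∈ ({p, q, r} : Set W), ∀ j, Function.update g i x j ∈ ({p, q, r} : Set W) ∨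
        Function.update g i x j = c := by
      intro x hx j
      by_cases hji : j = i
      · subst hji; left; simpa using hx
      · rw [Function.update_of_ne hji]; exact hmix k j
    have npp := S.Q_nonneg hpq (fun j => hsubc _ (upm p (by simp) j))
    have nqq := S.Q_nonneg hpq (fun j => hsubc _ (upm q (by simp) j))
    have csp := S.Q_cs hpq hrc (fun j => hsubc _ (upm p (by simp) j))
    have csq := S.Q_cs hpq hrc (fun j => hsubc _ (upm q (by simp) j))
    have vp := bv _ (upm p (by simp))
    have vq := bv _ (upm q (by simp))
    refine step_arith (hb0 k) hCM (bu g (hmix k)) hs (hb0 (k + 1)) (csp.trans ?_) (csq.trans ?_)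
    · calc _ ≤ S.Q (p - q) (p - q) (Function.update g i p) * (C * M) := by gcongr
        _ ≤ _ := by
          gcongr
          linarith
    · calc _ ≤ S.Q (p - q) (p - q) (Function.update g i q) * (C * M) := by gcongr
        _ ≤ _ := by
          gcongr
          linarith
  have start : S.Q (p - q) (p - q) (mixVec r c 0) ≤ S.Ifun p q := by
    refine S.Q_mid (p - q) {p, q} (p := p) (q := q) (by simp) (by simp) _ ?_ _ ?_
    · intro h hh
      exact S.Q_le_I hp hq (fun i => by simpa using hh i)
    · intro i
      right
      simp [mixVec, hc]
  have hKM : 0 ≤ 24 * C * M := by positivity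
  have main : ∀ k : ℕ, k ≤ m → S.Q (p - q) (p - q) (mixVec r c k) ^ (2 ^ k) ≤
      (24 * C * M) ^ (2 ^ k - 1) * S.Ifun p q := by
    intro k
    induction k with
    | zero => intro _; simpa using start
    | succ k ih =>
      intro hk
      have ih' := ih (by omega)
      have hpow : 1 ≤ 2 ^ k := Nat.one_le_two_pow
      calc S.Q (p - q) (p - q) (mixVec r c (k + 1)) ^ (2 ^ (k + 1))
          = (S.Q (p - q) (p - q) (mixVec r c (k + 1)) ^ 2) ^ (2 ^ k) := by
            rw [← pow_mul]; congr 1; ring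
        _ ≤ (24 * C * M * S.Q (p - q) (p - q) (mixVec r c k)) ^ (2 ^ k) := by
            gcongr
            exact step k (by omega)
        _ = (24 * C * M) ^ (2 ^ k) * S.Q (p - q) (p - q) (mixVec r c k) ^ (2 ^ k) := mul_pow _ _ _
        _ ≤ (24 * C * M) ^ (2 ^ k) * ((24 * C * M) ^ (2 ^ k - 1) * S.Ifun p q) := by gcongr
        _ = (24 * C * M) ^ (2 ^ (k + 1) - 1) * S.Ifun p q := by
            rw [← mul_assoc, ← pow_add]
            congr 2
            rw [pow_succ]; omega
  have hlast : (mixVec r c m : Fin m → W) = fun _ => r := by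
    funext i; simp [mixVec]
  have := main m le_rfl
  rwa [hlast] at this

end MASetup

/-- there is `C > 0` depending only on `n = m + 1` such that for
every setup and all `φ₁, φ₂, ψ ∈ F`:
`-B(φ₁-φ₂, φ₁-φ₂, ψ, …, ψ) ≤ C I(φ₁,φ₂)^{1/2^{n-1}} (max I(φᵢ,ψ))^{1-1/2^{n-1}}`. -/
theorem hodge_interpolation (m : ℕ) :
    ∃ C : ℝ, 0 < C ∧
      ∀ (W : Type*) [AddCommGroup W] [Module ℝ W] (S : MASetup m W),
        ∀ φ₁ ∈ S.F, ∀ φ₂ ∈ S.F, ∀ ψ ∈ S.F,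
          -S.B (Fin.cons (φ₁ - φ₂) (Fin.cons (φ₁ - φ₂) fun _ : Fin m => ψ)) ≤
            C * S.Ifun φ₁ φ₂ ^ ((1 : ℝ) / 2 ^ m) *
              (max (S.Ifun φ₁ ψ) (S.Ifun φ₂ ψ)) ^ (1 - (1 : ℝ) / 2 ^ m) := by
  obtain ⟨K, hK0, hK⟩ := MASetup.iterate_bound m
  refine ⟨K ^ (1 - (1 : ℝ) / 2 ^ m), by positivity, ?_⟩
  intro W _ _ S p hp q hq r hr
  set M := max (S.Ifun p r) (S.Ifun q r) with hM
  have h := hK W S p q r hp hq hr M (le_max_left _ _) (le_max_right _ _)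
  have hM0 : 0 ≤ M := (S.Ifun_nonneg hp hr).trans (le_max_left _ _)
  have hI0 := S.Ifun_nonneg hp hq
  have hQ0 := S.Q_nonneg (S.sub_mem_W0 hp hq) (g := fun _ => r) (fun _ => hr)
  change S.Q (p - q) (p - q) (fun _ => r) ≤ _
  have hN : (2 ^ m : ℕ) ≠ 0 := by positivity
  have hKM : 0 ≤ K * M := by positivity
  have h1 := Real.rpow_le_rpow (by positivity) h (z := (1 : ℝ) / 2 ^ m) (by positivity)
  have e1 : (S.Q (p - q) (p - q) (fun _ => r) ^ (2 ^ m)) ^ ((1 : ℝ) / 2 ^ m) =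
      S.Q (p - q) (p - q) (fun _ => r) := by
    have := Real.pow_rpow_inv_natCast hQ0 hN
    rw [one_div]
    exact_mod_cast this
  have e2 : ((K * M) ^ (2 ^ m - 1)) ^ ((1 : ℝ) / 2 ^ m) = (K * M) ^ (1 - (1 : ℝ) / 2 ^ m) := by
    rw [← Real.rpow_natCast, ← Real.rpow_mul hKM]
    congr 1
    rw [Nat.cast_sub Nat.one_le_two_pow]
    push_cast
    field_simp
  rw [e1, Real.mul_rpow (by positivity) hI0, e2, Real.mul_rpow hK0.le hM0] at h1
  linarith
end
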